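/- Let n ≥ 2, let Ω ⊆ ℂ be a connected open set, and let φ₁,…,φₙ be smooth real-valued functions on Ω with φ₁+⋯+φₙ = 0 satisfying the A_{n−1} Toda equations. Let A' = diag(∂φ₁,…,∂φₙ) + ℰ₊ and A'' = Σ_{i=1}^{n−1} e^{φᵢ−φᵢ₊₁} E_{i+1,i} be the Toda connection forms. Then there exist a smooth map G: Ω → SLₙ(ℂ) taking values in lower-triangular unipotent matrices and holomorphic functions w₂,…,wₙ on Ω such that G⁻¹A'G + G⁻¹∂G = ℰ₊ + Σ_{j=1}^{n−1} w_{n+1−j}·E_{n,j} (the Drinfeld–Sokolov form, with last row (wₙ, w_{n−1}, …, w₂, 0)) and G⁻¹A''G + G⁻¹∂̄G = 0. -/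

import Mathlib

open Complex Matrix

/-- Wirtinger derivative `∂f = ½(∂ₓf − i ∂_y f)`. -/
noncomputable def wd (f : ℂ → ℂ) (z : ℂ) : ℂ :=
  (1 / 2 : ℂ) * (fderiv ℝ f z 1 - Complex.I * fderiv ℝ f z Complex.I)

/-- Wirtinger derivative `∂̄f = ½(∂ₓf + i ∂_y f)`. -/
noncomputable def wdb (f : ℂ → ℂ) (z : ℂ) : ℂ :=
  (1 / 2 : ℂ) * (fderiv ℝ f z 1 + Complex.I * fderiv ℝ f z Complex.I)

/-- Entrywise Wirtinger derivative `∂A` of a matrix-valued function. -/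
noncomputable def mwd {n : ℕ} (A : ℂ → Matrix (Fin n) (Fin n) ℂ) (z : ℂ) :
    Matrix (Fin n) (Fin n) ℂ :=
  Matrix.of fun i j => wd (fun w => A w i j) z

/-- Entrywise Wirtinger derivative `∂̄A` of a matrix-valued function. -/
noncomputable def mwdb {n : ℕ} (A : ℂ → Matrix (Fin n) (Fin n) ℂ) (z : ℂ) :
    Matrix (Fin n) (Fin n) ℂ :=
  Matrix.of fun i j => wdb (fun w => A w i j) z

/-- Toda connection form `A' = diag(∂φ₁,…,∂φₙ) + ℰ₊`. -/
noncomputable def todaAp (n : ℕ) (φ : Fin n → ℂ → ℝ) (z : ℂ) : Matrix (Fin n) (Fin n) ℂ :=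
  Matrix.of fun (i j : Fin n) =>
    if i = j then wd (fun w => ((φ i w : ℝ) : ℂ)) z
    else if (j : ℕ) = (i : ℕ) + 1 then 1
    else 0

/-- Toda connection form `A'' = Σ_{i=1}^{n−1} e^{φᵢ−φᵢ₊₁} E_{i+1,i}`. -/
noncomputable def todaApp (n : ℕ) (φ : Fin n → ℂ → ℝ) (z : ℂ) : Matrix (Fin n) (Fin n) ℂ :=
  Matrix.of fun (i j : Fin n) =>
    if (i : ℕ) = (j : ℕ) + 1 then ((Real.exp (φ j z - φ i z) : ℝ) : ℂ) else 0

/-- Right-hand side `e^{φᵢ−φᵢ₊₁} − e^{φᵢ₋₁−φᵢ}` of the `A_{n−1}` Toda equations. -/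
noncomputable def todaRHS (n : ℕ) (φ : Fin n → ℂ → ℝ) (i : Fin n) (z : ℂ) : ℂ :=
  (if h : (i : ℕ) + 1 < n then ((Real.exp (φ i z - φ ⟨(i : ℕ) + 1, h⟩ z) : ℝ) : ℂ) else 0) -
  (if 0 < (i : ℕ) then
      ((Real.exp (φ ⟨(i : ℕ) - 1, lt_of_le_of_lt (Nat.sub_le _ _) i.isLt⟩ z - φ i z) : ℝ) : ℂ)
    else 0)

/-!
Write the rows of `G` as coefficient sequences `P₀, P₁, …`, all indices starting at `0`. As `G` is
lower-triangular unipotent, `P₀ = (1, 0, 0, …)`, and the `∂`-part of the gauge equation becomes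
`Pᵢ₊₁ = shift Pᵢ − aᵢ Pᵢ − ∂Pᵢ` with `aᵢ = ∂φᵢ`; the row `Pₙ`, which does not fit in the matrix, is
minus the last row of the Drinfeld–Sokolov form. Flatness of the Toda connection gives
`∂̄Pᵢ₊₁ = −bᵢ Pᵢ` with `bᵢ = e^{φᵢ−φᵢ₊₁}`, by induction on `i`. For `i + 1 < n` this is the
`∂̄`-part of the gauge equation, and for `i + 1 = n`, where `bᵢ = 0`, it says that `Pₙ` is
holomorphic. The entry of `Pₙ` at `n − 1` is `−(a₀ + ⋯ + aₙ₋₁) = −∂(Σ φᵢ) = 0`.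
-/

open scoped ContDiff Topology

lemma differentiableAt_of_contDiffOn {𝕜 E F : Type*} [NontriviallyNormedField 𝕜]
    [NormedAddCommGroup E] [NormedSpace 𝕜 E] [NormedAddCommGroup F] [NormedSpace 𝕜 F]
    {f : E → F} {s : Set E} {x : E} {m : WithTop ℕ∞} (hf : ContDiffOn 𝕜 m f s) (hs : IsOpen s)
    (hx : x ∈ s) (hm : m ≠ 0 := by simp) : DifferentiableAt 𝕜 f x :=
  (hf.differentiableOn hm).differentiableAt (hs.mem_nhds hx)

section Wirtinger

variable {f g : ℂ → ℂ} {z : ℂ}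

lemma wd_congr (h : f =ᶠ[𝓝 z] g) : wd f z = wd g z := by
  simp only [wd, h.fderiv_eq]

@[simp]
lemma wd_const (c z : ℂ) : wd (fun _ => c) z = 0 := by
  simp [wd]

@[simp]
lemma wdb_const (c z : ℂ) : wdb (fun _ => c) z = 0 := by
  simp [wdb]

lemma wd_neg : wd (-f) z = -wd f z := by
  simp only [wd, fderiv_neg, _root_.neg_apply]
  ring

lemma wdb_neg : wdb (-f) z = -wdb f z := by
  simp only [wdb, fderiv_neg, _root_.neg_apply]
  ring

lemma wd_sub (hf : DifferentiableAt ℝ f z) (hg : DifferentiableAt ℝ g z) :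
    wd (f - g) z = wd f z - wd g z := by
  simp only [wd, fderiv_sub hf hg, _root_.sub_apply]
  ring

lemma wdb_sub (hf : DifferentiableAt ℝ f z) (hg : DifferentiableAt ℝ g z) :
    wdb (f - g) z = wdb f z - wdb g z := by
  simp only [wdb, fderiv_sub hf hg, _root_.sub_apply]
  ring

lemma wd_sum {ι : Type*} {s : Finset ι} {f : ι → ℂ → ℂ}
    (hf : ∀ i ∈ s, DifferentiableAt ℝ (f i) z) :
    wd (∑ i ∈ s, f i) z = ∑ i ∈ s, wd (f i) z := by
  simp only [wd, fderiv_sum hf, _root_.sum_apply, Finset.mul_sum, Finset.sum_sub_distrib, mul_sub]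

lemma wd_mul (hf : DifferentiableAt ℝ f z) (hg : DifferentiableAt ℝ g z) :
    wd (f * g) z = wd f z * g z + f z * wd g z := by
  simp only [wd, fderiv_mul hf hg, _root_.add_apply, _root_.smul_apply, smul_eq_mul]
  ring

lemma wdb_mul (hf : DifferentiableAt ℝ f z) (hg : DifferentiableAt ℝ g z) :
    wdb (f * g) z = wdb f z * g z + f z * wdb g z := by
  simp only [wdb, fderiv_mul hf hg, _root_.add_apply, _root_.smul_apply, smul_eq_mul]
  ring

lemma wd_cexp (hf : DifferentiableAt ℝ f z) :
    wd (fun w => cexp (f w)) z = cexp (f z) * wd f z := by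
  simp only [wd, hf.hasFDerivAt.cexp.fderiv, _root_.smul_apply, smul_eq_mul]
  ring

lemma contDiffOn_wd {Ω : Set ℂ} {m k : WithTop ℕ∞} (hf : ContDiffOn ℝ k f Ω) (hΩ : IsOpen Ω)
    (hmk : m + 1 ≤ k) : ContDiffOn ℝ m (wd f) Ω := by
  have hderiv := hf.fderiv_of_isOpen hΩ hmk
  exact contDiffOn_const.mul ((hderiv.clm_apply contDiffOn_const).sub
    (contDiffOn_const.mul (hderiv.clm_apply contDiffOn_const)))

lemma wdb_wd_comm (hf : ContDiffAt ℝ 2 f z) : wdb (wd f) z = wd (wdb f) z := by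
  have hsymm : IsSymmSndFDerivAt ℝ f z := hf.isSymmSndFDerivAt (by simp)
  have hd : DifferentiableAt ℝ (fderiv ℝ f) z :=
    (hf.fderiv_right (m := 1) (by norm_num)).differentiableAt one_ne_zero
  have hdv (v : ℂ) : DifferentiableAt ℝ (fun w => fderiv ℝ f w v) z :=
    hd.clm_apply (differentiableAt_const v)
  have hfderiv (u v : ℂ) :
      fderiv ℝ (fun w => fderiv ℝ f w v) z u = fderiv ℝ (fderiv ℝ f) z u v := by
    simp [fderiv_clm_apply hd (differentiableAt_const v)]
  have hwd (u : ℂ) : fderiv ℝ (wd f) z u = (1 / 2 : ℂ) *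
      (fderiv ℝ (fderiv ℝ f) z u 1 - I * fderiv ℝ (fderiv ℝ f) z u I) := by
    unfold wd
    rw [fderiv_const_mul ((hdv 1).fun_sub ((hdv I).const_mul I)),
      fderiv_fun_sub (hdv 1) ((hdv I).const_mul I), fderiv_const_mul (hdv I)]
    simp only [_root_.smul_apply, _root_.sub_apply, smul_eq_mul, hfderiv]
  have hwdb (u : ℂ) : fderiv ℝ (wdb f) z u = (1 / 2 : ℂ) *
      (fderiv ℝ (fderiv ℝ f) z u 1 + I * fderiv ℝ (fderiv ℝ f) z u I) := by
    unfold wdb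
    rw [fderiv_const_mul ((hdv 1).fun_add ((hdv I).const_mul I)),
      fderiv_fun_add (hdv 1) ((hdv I).const_mul I), fderiv_const_mul (hdv I)]
    simp only [_root_.smul_apply, _root_.add_apply, smul_eq_mul, hfderiv]
  rw [wdb, wd, hwd, hwd, hwdb, hwdb, hsymm.eq I 1]
  ring

end Wirtinger

section Shift

/-- The right shift `(p₀, p₁, …) ↦ (0, p₀, p₁, …)`; it also encodes the convention that a term of
index `-1` vanishes. -/
def shift {M : Type*} [Zero M] (p : ℕ → M) : ℕ → M
  | 0 => 0
  | j + 1 => p j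

@[simp]
lemma shift_zero {M : Type*} [Zero M] (p : ℕ → M) : shift p 0 = 0 := rfl

@[simp]
lemma shift_succ {M : Type*} [Zero M] (p : ℕ → M) (j : ℕ) : shift p (j + 1) = p j := rfl

lemma shift_apply {X M : Type*} [Zero M] (p : ℕ → X → M) (j : ℕ) (x : X) :
    shift p j x = shift (fun k => p k x) j := by
  cases j <;> rfl

lemma shift_mul_left {R : Type*} [MulZeroClass R] (c : R) (p : ℕ → R) (j : ℕ) :
    shift (fun k => c * p k) j = c * shift p j := by
  cases j <;> simp

lemma wdb_shift (p : ℕ → ℂ → ℂ) (j : ℕ) (z : ℂ) :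
    wdb (shift p j) z = shift (fun k => wdb (p k) z) j := by
  cases j
  · exact wdb_const 0 z
  · rfl

lemma contDiffOn_shift {Ω : Set ℂ} {m : WithTop ℕ∞} {p : ℕ → ℂ → ℂ}
    (hp : ∀ k, ContDiffOn ℝ m (p k) Ω) (j : ℕ) : ContDiffOn ℝ m (shift p j) Ω := by
  cases j
  · exact contDiffOn_const
  · exact hp _

end Shift

section GaugeRow

/-- The `i`-th row of the gauge transformation for the diagonal entries `a`, as an infinite
coefficient sequence. The index `i` is unbounded: row `n` is not part of the `n × n` gauge
transformation but carries the Drinfeld–Sokolov coefficients. -/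
noncomputable def gaugeRow (a : ℕ → ℂ → ℂ) : ℕ → ℕ → ℂ → ℂ
  | 0 => Pi.single 0 1
  | i + 1 => fun j => shift (gaugeRow a i) j - a i * gaugeRow a i j - wd (gaugeRow a i j)

variable (a : ℕ → ℂ → ℂ)

lemma gaugeRow_zero (j : ℕ) : gaugeRow a 0 j = fun _ => if j = 0 then 1 else 0 := by
  rcases j with _ | j <;> rfl

lemma gaugeRow_succ (i j : ℕ) : gaugeRow a (i + 1) j =
    shift (gaugeRow a i) j - a i * gaugeRow a i j - wd (gaugeRow a i j) := rfl

lemma gaugeRow_succ_apply (i j : ℕ) (z : ℂ) : gaugeRow a (i + 1) j z =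
    shift (fun k => gaugeRow a i k z) j - a i z * gaugeRow a i j z - wd (gaugeRow a i j) z := by
  simp [gaugeRow_succ, shift_apply]

lemma gaugeRow_eq_zero_of_lt {i j : ℕ} (hij : i < j) : gaugeRow a i j = fun _ => 0 := by
  induction i generalizing j with
  | zero => simp [gaugeRow_zero, hij.ne']
  | succ i ih =>
    obtain ⟨j, rfl⟩ := Nat.exists_eq_add_one_of_ne_zero (Nat.ne_zero_of_lt hij)
    ext z
    simp [gaugeRow_succ_apply, ih (Nat.lt_of_succ_lt_succ hij), ih (Nat.lt_of_succ_lt hij)]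

lemma gaugeRow_self (i : ℕ) : gaugeRow a i i = fun _ => 1 := by
  induction i with
  | zero => simp [gaugeRow_zero]
  | succ i ih =>
    ext z
    simp [gaugeRow_succ_apply, ih, gaugeRow_eq_zero_of_lt a (Nat.lt_succ_self i)]

lemma gaugeRow_succ_self (i : ℕ) (z : ℂ) :
    gaugeRow a (i + 1) i z = -∑ k ∈ Finset.range (i + 1), a k z := by
  induction i with
  | zero => simp [gaugeRow_succ_apply, gaugeRow_self]
  | succ i ih =>
    rw [Finset.sum_range_succ, neg_add, ← ih]
    simp [gaugeRow_succ_apply a (i + 1), gaugeRow_self, sub_eq_add_neg]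

variable {a} {b : ℕ → ℂ → ℂ} {Ω : Set ℂ}

lemma contDiffOn_gaugeRow (hΩ : IsOpen Ω) (ha : ∀ i, ContDiffOn ℝ ∞ (a i) Ω) (i j : ℕ) :
    ContDiffOn ℝ ∞ (gaugeRow a i j) Ω := by
  induction i generalizing j with
  | zero => exact gaugeRow_zero a j ▸ contDiffOn_const
  | succ i ih =>
    exact ((contDiffOn_shift ih j).sub ((ha i).mul (ih j))).sub (contDiffOn_wd (ih j) hΩ (by simp))

lemma wdb_gaugeRow_succ (hΩ : IsOpen Ω) (ha : ∀ i, ContDiffOn ℝ ∞ (a i) Ω) (i j : ℕ) {z : ℂ}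
    (hz : z ∈ Ω) : wdb (gaugeRow a (i + 1) j) z =
      shift (fun k => wdb (gaugeRow a i k) z) j
        - (wdb (a i) z * gaugeRow a i j z + a i z * wdb (gaugeRow a i j) z)
        - wd (wdb (gaugeRow a i j)) z := by
  have hdiff {f : ℂ → ℂ} (hf : ContDiffOn ℝ ∞ f Ω) : DifferentiableAt ℝ f z :=
    differentiableAt_of_contDiffOn hf hΩ hz
  have hrow := contDiffOn_gaugeRow hΩ ha i
  have hrow_two : ContDiffAt ℝ 2 (gaugeRow a i j) z :=
    contDiffAt_infty.mp ((hrow j).contDiffAt (hΩ.mem_nhds hz)) 2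
  have hshift := hdiff (contDiffOn_shift hrow j)
  have hmul := (hdiff (ha i)).mul (hdiff (hrow j))
  rw [gaugeRow_succ, wdb_sub (hshift.sub hmul) (hdiff (contDiffOn_wd (hrow j) hΩ (by simp))),
    wdb_sub hshift hmul, wdb_mul (hdiff (ha i)) (hdiff (hrow j)), wdb_shift, wdb_wd_comm hrow_two]

/-- Flatness on `Ω` of the smooth connection with `∂`-part `diag(a₀, a₁, …) + ℰ₊` and `∂̄`-part
having the subdiagonal `(b₀, b₁, …)`: the equations are the diagonal and subdiagonal entries of
`∂̄A' = ∂A'' + [A', A'']`. A connection of finite size is extended by zero, so that no equation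
needs a bound on `i`. -/
structure IsTodaFlat (Ω : Set ℂ) (a b : ℕ → ℂ → ℂ) : Prop where
  contDiffOn_diag : ∀ i, ContDiffOn ℝ ∞ (a i) Ω
  contDiffOn_subdiag : ∀ i, ContDiffOn ℝ ∞ (b i) Ω
  wdb_diag : ∀ i, ∀ z ∈ Ω, wdb (a i) z = b i z - shift (fun k => b k z) i
  wd_subdiag : ∀ i, ∀ z ∈ Ω, wd (b i) z = (a i z - a (i + 1) z) * b i z

theorem IsTodaFlat.wdb_gaugeRow (h : IsTodaFlat Ω a b) (hΩ : IsOpen Ω) (i j : ℕ) {z : ℂ}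
    (hz : z ∈ Ω) : wdb (gaugeRow a (i + 1) j) z = -(b i z * gaugeRow a i j z) := by
  induction i generalizing j z with
  | zero =>
    have hwdb_zero (k : ℕ) : wdb (gaugeRow a 0 k) = fun _ => 0 := by
      ext; simp [gaugeRow_zero]
    have hshift : shift (fun _ => (0 : ℂ)) j = 0 := by cases j <;> rfl
    simp [wdb_gaugeRow_succ hΩ h.contDiffOn_diag 0 j hz, hwdb_zero, h.wdb_diag 0 z hz, hshift]
  | succ i ih =>
    have hwd_wdb : wd (wdb (gaugeRow a (i + 1) j)) z =
        -((a i z - a (i + 1) z) * b i z * gaugeRow a i j z + b i z * wd (gaugeRow a i j) z) := by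
      have hb := differentiableAt_of_contDiffOn (h.contDiffOn_subdiag i) hΩ hz
      have hrow := differentiableAt_of_contDiffOn
        (contDiffOn_gaugeRow hΩ h.contDiffOn_diag i j) hΩ hz
      have hnear : wdb (gaugeRow a (i + 1) j) =ᶠ[𝓝 z] -(b i * gaugeRow a i j) := by
        filter_upwards [hΩ.mem_nhds hz] with w hw using ih j hw
      rw [wd_congr hnear, wd_neg, wd_mul hb hrow, h.wd_subdiag i z hz]
    have hshift : shift (fun k => wdb (gaugeRow a (i + 1) k) z) j =
        -b i z * shift (fun k => gaugeRow a i k z) j := by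
      simp only [← shift_mul_left, ih _ hz, neg_mul]
    rw [wdb_gaugeRow_succ hΩ h.contDiffOn_diag (i + 1) j hz, hwd_wdb, hshift,
      h.wdb_diag (i + 1) z hz, shift_succ, ih j hz]
    linear_combination b i z * gaugeRow_succ_apply a i j z

end GaugeRow

section TodaSolution

variable {n : ℕ} (φ : Fin n → ℂ → ℝ)

/-- The potentials `φᵢ` as complex-valued functions, extended by zero to all `i : ℕ`. -/
noncomputable def todaPotential (i : ℕ) (z : ℂ) : ℂ :=
  if h : i < n then (φ ⟨i, h⟩ z : ℂ) else 0

/-- The diagonal entries `∂φᵢ` of `A'`, extended by zero to all `i : ℕ`. -/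
noncomputable def todaDiag (i : ℕ) : ℂ → ℂ :=
  wd (todaPotential φ i)

/-- The subdiagonal entries `e^{φᵢ−φᵢ₊₁}` of `A''`, extended by zero to all `i : ℕ`. -/
noncomputable def todaSubdiag (i : ℕ) (z : ℂ) : ℂ :=
  if i + 1 < n then cexp (todaPotential φ i z - todaPotential φ (i + 1) z) else 0

lemma todaPotential_of_lt {i : ℕ} (hi : i < n) :
    todaPotential φ i = fun z => (φ ⟨i, hi⟩ z : ℂ) := by
  ext; simp [todaPotential, hi]

lemma todaPotential_eq_zero {i : ℕ} (hi : n ≤ i) : todaPotential φ i = fun _ => 0 := by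
  ext; simp [todaPotential, hi.not_gt]

lemma todaDiag_eq_zero {i : ℕ} (hi : n ≤ i) : todaDiag φ i = fun _ => 0 := by
  ext; simp [todaDiag, todaPotential_eq_zero φ hi]

lemma todaSubdiag_of_lt {i : ℕ} (hi : i + 1 < n) : todaSubdiag φ i =
    fun z => cexp (todaPotential φ i z - todaPotential φ (i + 1) z) := by
  ext; simp [todaSubdiag, hi]

lemma todaSubdiag_eq_zero {i : ℕ} (hi : n ≤ i + 1) : todaSubdiag φ i = fun _ => 0 := by
  ext; simp [todaSubdiag, hi.not_gt]

lemma ofReal_exp_sub_eq_todaSubdiag {i : ℕ} (hi : i + 1 < n) (z : ℂ) :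
    (Real.exp (φ ⟨i, Nat.lt_of_succ_lt hi⟩ z - φ ⟨i + 1, hi⟩ z) : ℂ) = todaSubdiag φ i z := by
  simp [todaSubdiag_of_lt φ hi, todaPotential_of_lt φ hi,
    todaPotential_of_lt φ (Nat.lt_of_succ_lt hi)]

lemma todaRHS_eq (i : Fin n) (z : ℂ) :
    todaRHS n φ i z = todaSubdiag φ i z - shift (fun k => todaSubdiag φ k z) i := by
  have hnext : (if h : (i : ℕ) + 1 < n then (Real.exp (φ i z - φ ⟨(i : ℕ) + 1, h⟩ z) : ℂ) else 0)
      = todaSubdiag φ i z := by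
    split_ifs with h
    · exact ofReal_exp_sub_eq_todaSubdiag φ h z
    · simp [todaSubdiag_eq_zero φ (not_lt.mp h)]
  rw [todaRHS, hnext]
  obtain ⟨_ | i, hi⟩ := i
  · simp
  · simpa using ofReal_exp_sub_eq_todaSubdiag φ hi z

variable {φ} {Ω : Set ℂ}

lemma contDiffOn_todaPotential {m : WithTop ℕ∞} (hφ : ∀ i, ContDiffOn ℝ m (φ i) Ω) (i : ℕ) :
    ContDiffOn ℝ m (todaPotential φ i) Ω := by
  obtain hi | hi := lt_or_ge i n
  · exact todaPotential_of_lt φ hi ▸ Complex.ofRealCLM.contDiff.comp_contDiffOn (hφ ⟨i, hi⟩)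
  · exact todaPotential_eq_zero φ hi ▸ contDiffOn_const

lemma contDiffOn_todaSubdiag {m : WithTop ℕ∞} (hφ : ∀ i, ContDiffOn ℝ m (φ i) Ω) (i : ℕ) :
    ContDiffOn ℝ m (todaSubdiag φ i) Ω := by
  obtain hi | hi := lt_or_ge (i + 1) n
  · exact todaSubdiag_of_lt φ hi ▸
      ((contDiffOn_todaPotential hφ i).sub (contDiffOn_todaPotential hφ (i + 1))).cexp
  · exact todaSubdiag_eq_zero φ hi ▸ contDiffOn_const

lemma wd_todaSubdiag {z : ℂ} (hφ : ∀ i, DifferentiableAt ℝ (todaPotential φ i) z) (i : ℕ) :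
    wd (todaSubdiag φ i) z = (todaDiag φ i z - todaDiag φ (i + 1) z) * todaSubdiag φ i z := by
  obtain hi | hi := lt_or_ge (i + 1) n
  · have hsub := (hφ i).sub (hφ (i + 1))
    simp only [todaSubdiag_of_lt φ hi, todaDiag, ← wd_sub (hφ i) (hφ (i + 1)), mul_comm]
    exact wd_cexp hsub
  · simp [todaSubdiag_eq_zero φ hi]

lemma wdb_todaDiag {z : ℂ} (hφ : ∀ i, ContDiffAt ℝ 2 (todaPotential φ i) z)
    (htoda : ∀ i : Fin n, wd (wdb fun v => (φ i v : ℂ)) z = todaRHS n φ i z) (i : ℕ) :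
    wdb (todaDiag φ i) z = todaSubdiag φ i z - shift (fun k => todaSubdiag φ k z) i := by
  obtain hi | hi := lt_or_ge i n
  · rw [todaDiag, wdb_wd_comm (hφ i), todaPotential_of_lt φ hi, htoda, todaRHS_eq]
  · have hshift : shift (fun k => todaSubdiag φ k z) i = 0 := by
      cases i
      · rfl
      · simp [todaSubdiag_eq_zero φ hi]
    simp [todaDiag_eq_zero φ hi, todaSubdiag_eq_zero φ (Nat.le_succ_of_le hi), hshift]

theorem isTodaFlat_toda (hΩ : IsOpen Ω) (hφ : ∀ i, ContDiffOn ℝ ∞ (φ i) Ω)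
    (htoda : ∀ z ∈ Ω, ∀ i : Fin n, wd (wdb fun v => (φ i v : ℂ)) z = todaRHS n φ i z) :
    IsTodaFlat Ω (todaDiag φ) (todaSubdiag φ) where
  contDiffOn_diag i := contDiffOn_wd (contDiffOn_todaPotential hφ i) hΩ (by simp)
  contDiffOn_subdiag := contDiffOn_todaSubdiag hφ
  wdb_diag i _ hz := wdb_todaDiag (fun k => contDiffAt_infty.mp
    ((contDiffOn_todaPotential hφ k).contDiffAt (hΩ.mem_nhds hz)) 2) (htoda _ hz) i
  wd_subdiag i _ hz := wd_todaSubdiag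
    (fun k => differentiableAt_of_contDiffOn (contDiffOn_todaPotential hφ k) hΩ hz) i

lemma sum_todaDiag_eq_zero {m : WithTop ℕ∞} (hm : m ≠ 0) (hΩ : IsOpen Ω)
    (hφ : ∀ i, ContDiffOn ℝ m (φ i) Ω) (hsum : ∀ z ∈ Ω, ∑ i, φ i z = 0) {z : ℂ} (hz : z ∈ Ω) :
    ∑ k ∈ Finset.range n, todaDiag φ k z = 0 := by
  have hnear : ∑ k ∈ Finset.range n, todaPotential φ k =ᶠ[𝓝 z] fun _ => 0 := by
    filter_upwards [hΩ.mem_nhds hz] with w hw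
    rw [Finset.sum_apply, ← Fin.sum_univ_eq_sum_range (fun k => todaPotential φ k w)]
    simpa [todaPotential] using congrArg ((↑) : ℝ → ℂ) (hsum w hw)
  simp only [todaDiag]
  rw [← wd_sum fun k _ => differentiableAt_of_contDiffOn (contDiffOn_todaPotential hφ k) hΩ hz hm,
    wd_congr hnear, wd_const]

end TodaSolution

section GaugeMatrix

lemma sum_fin_ite_val_eq {M : Type*} [AddCommMonoid M] (n m : ℕ) (F : ℕ → M) :
    ∑ k : Fin n, (if (k : ℕ) = m then F k else 0) = if m < n then F m else 0 := by
  rw [Fin.sum_univ_eq_sum_range (fun k => if k = m then F k else 0)]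
  simp

lemma nonsing_inv_gauge_eq {m R : Type*} [Fintype m] [DecidableEq m] [CommRing R]
    {G A D B : Matrix m m R} (hG : IsUnit G.det) (h : A * G + D = G * B) :
    G⁻¹ * A * G + G⁻¹ * D = B := by
  rw [mul_assoc, ← mul_add, h, nonsing_inv_mul_cancel_left _ _ hG]

/-- The gauge transformation as a matrix: the first `n` rows and columns of `gaugeRow a`. -/
noncomputable def gaugeMatrix (n : ℕ) (a : ℕ → ℂ → ℂ) (z : ℂ) : Matrix (Fin n) (Fin n) ℂ :=
  of fun i j => gaugeRow a i j z

/-- The matrix `ℰ₊ + Σⱼ w_{n+1−j} E_{n,j}` with `j` running from `1` to `n`, so that the last row is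
`(wₙ, …, w₁)`; the Drinfeld–Sokolov form is the case `w₁ = 0`. -/
def drinfeldSokolovMatrix {R : Type*} [Semiring R] (n : ℕ) (w : ℕ → R) :
    Matrix (Fin n) (Fin n) R :=
  of fun i j => (if (j : ℕ) = i + 1 then 1 else 0) + if (i : ℕ) = n - 1 then w (n - j) else 0

variable {n : ℕ}

lemma drinfeldSokolovMatrix_of_one_eq_zero {R : Type*} [Semiring R] {w : ℕ → R} (hw : w 1 = 0) :
    drinfeldSokolovMatrix n w = of fun i j : Fin n =>
      if (j : ℕ) = i + 1 then 1
      else if (i : ℕ) = n - 1 ∧ (j : ℕ) + 1 < n then w (n - j) else 0 := by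
  ext i j
  have hj := j.isLt
  obtain hji | hji := eq_or_ne (j : ℕ) (i + 1)
  · simp [drinfeldSokolovMatrix, hji, show (i : ℕ) ≠ n - 1 by omega]
  · obtain hjn | hjn : (j : ℕ) + 1 < n ∨ n - (j : ℕ) = 1 := by omega
    · simp [drinfeldSokolovMatrix, hji, hjn]
    · simp [drinfeldSokolovMatrix, hji, hjn, hw]

lemma of_mul_drinfeldSokolovMatrix_apply {R : Type*} [Semiring R] (p : ℕ → ℕ → R) (w : ℕ → R)
    (i j : Fin n) :
    ((of fun k l : Fin n => p k l) * drinfeldSokolovMatrix n w) i j =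
      shift (p i) j + p i (n - 1) * w (n - j) := by
  have hshift : ∑ k : Fin n, (if (j : ℕ) = k + 1 then p i k else 0) = shift (p i) j := by
    obtain ⟨_ | j, hj⟩ := j
    · simp
    · simpa [eq_comm, Nat.lt_of_succ_lt hj] using sum_fin_ite_val_eq n j (p i)
  have hlast : ∑ k : Fin n, (if (k : ℕ) = n - 1 then p i k * w (n - j) else 0) =
      p i (n - 1) * w (n - j) := by
    have hn : 0 < n := i.pos
    simpa [hn] using sum_fin_ite_val_eq n (n - 1) fun k => p i k * w (n - j)
  simp [drinfeldSokolovMatrix, mul_apply, mul_add, Finset.sum_add_distrib, hshift, hlast]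

lemma det_gaugeMatrix (a : ℕ → ℂ → ℂ) (z : ℂ) : (gaugeMatrix n a z).det = 1 := by
  have hlower : (gaugeMatrix n a z).IsLowerTriangular := fun i j (hij : (i : ℕ) < j) => by
    simp [gaugeMatrix, gaugeRow_eq_zero_of_lt a hij]
  rw [det_of_isLowerTriangular _ hlower]
  simp [gaugeMatrix, gaugeRow_self]

variable {φ : Fin n → ℂ → ℝ}

lemma todaAp_mul_of_apply (p : ℕ → ℕ → ℂ) (z : ℂ) (i j : Fin n) :
    (todaAp n φ z * of fun k l : Fin n => p k l) i j =
      todaDiag φ i z * p i j + if (i : ℕ) + 1 < n then p (i + 1) j else 0 := by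
  have hterm (k : Fin n) : todaAp n φ z i k * p k j =
      (if (k : ℕ) = i then todaDiag φ i z * p k j else 0) +
        if (k : ℕ) = i + 1 then p k j else 0 := by
    obtain rfl | hik := eq_or_ne i k
    · simp [todaAp, todaDiag, todaPotential_of_lt φ i.isLt]
    · simp [todaAp, hik, Fin.val_ne_of_ne hik.symm]
  simp [mul_apply, hterm, Finset.sum_add_distrib,
    sum_fin_ite_val_eq n i fun k => todaDiag φ i z * p k j,
    sum_fin_ite_val_eq n (i + 1) fun k => p k j]

lemma todaApp_mul_of_apply (p : ℕ → ℕ → ℂ) (z : ℂ) (i j : Fin n) :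
    (todaApp n φ z * of fun k l : Fin n => p k l) i j =
      shift (fun k => todaSubdiag φ k z * p k j) i := by
  obtain ⟨_ | i, hi⟩ := i
  · simp [todaApp, mul_apply]
  · have hterm (k : Fin n) : todaApp n φ z ⟨i + 1, hi⟩ k * p k j =
        if (k : ℕ) = i then todaSubdiag φ k z * p k j else 0 := by
      obtain ⟨k, hk⟩ := k
      obtain rfl | hik := eq_or_ne i k
      · simp [todaApp, ← ofReal_exp_sub_eq_todaSubdiag φ hi]
      · simp [todaApp, hik, hik.symm]
    simp [mul_apply, hterm, sum_fin_ite_val_eq n i fun k => todaSubdiag φ k z * p k j,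
      Nat.lt_of_succ_lt hi]

/-- The Drinfeld–Sokolov coefficient `w_k` of `φ`, read off from row `n` of the gauge recursion. It
is meant for `1 ≤ k ≤ n`, as the subtraction `n - k` is truncated. -/
noncomputable def drinfeldSokolovCoeff (φ : Fin n → ℂ → ℝ) (k : ℕ) : ℂ → ℂ :=
  -gaugeRow (todaDiag φ) n (n - k)

theorem todaAp_mul_gaugeMatrix_add_mwd (φ : Fin n → ℂ → ℝ) (z : ℂ) :
    todaAp n φ z * gaugeMatrix n (todaDiag φ) z + mwd (gaugeMatrix n (todaDiag φ)) z =
      gaugeMatrix n (todaDiag φ) z *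
        drinfeldSokolovMatrix n fun k => drinfeldSokolovCoeff φ k z := by
  ext i j
  have hmwd : mwd (gaugeMatrix n (todaDiag φ)) z i j = wd (gaugeRow (todaDiag φ) i j) z := rfl
  have hcoeff : drinfeldSokolovCoeff φ (n - j) z = -gaugeRow (todaDiag φ) n j z := by
    rw [drinfeldSokolovCoeff, Nat.sub_sub_self j.isLt.le, Pi.neg_apply]
  rw [Matrix.add_apply, hmwd, gaugeMatrix,
    todaAp_mul_of_apply fun k l => gaugeRow (todaDiag φ) k l z,
    of_mul_drinfeldSokolovMatrix_apply fun k l => gaugeRow (todaDiag φ) k l z, hcoeff]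
  have hrow := gaugeRow_succ_apply (todaDiag φ) i j z
  obtain hi | hi : (i : ℕ) + 1 < n ∨ (i : ℕ) + 1 = n := by omega
  · rw [if_pos hi, gaugeRow_eq_zero_of_lt _ (show (i : ℕ) < n - 1 by omega)]
    linear_combination hrow
  · rw [hi] at hrow
    rw [if_neg hi.not_lt, show n - 1 = i by omega, gaugeRow_self]
    linear_combination hrow

theorem todaApp_mul_gaugeMatrix_add_mwdb {Ω : Set ℂ} (hΩ : IsOpen Ω)
    (hflat : IsTodaFlat Ω (todaDiag φ) (todaSubdiag φ)) {z : ℂ} (hz : z ∈ Ω) :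
    todaApp n φ z * gaugeMatrix n (todaDiag φ) z + mwdb (gaugeMatrix n (todaDiag φ)) z = 0 := by
  ext i j
  have hmwdb : mwdb (gaugeMatrix n (todaDiag φ)) z i j = wdb (gaugeRow (todaDiag φ) i j) z := rfl
  rw [Matrix.add_apply, hmwdb, gaugeMatrix,
    todaApp_mul_of_apply fun k l => gaugeRow (todaDiag φ) k l z]
  obtain ⟨_ | i, hi⟩ := i
  · simp [gaugeRow_zero]
  · simp [hflat.wdb_gaugeRow hΩ i j hz]


lemma wdb_drinfeldSokolovCoeff {Ω : Set ℂ} (hΩ : IsOpen Ω)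
    (hflat : IsTodaFlat Ω (todaDiag φ) (todaSubdiag φ)) (k : ℕ) {z : ℂ}
    (hz : z ∈ Ω) : wdb (drinfeldSokolovCoeff φ k) z = 0 := by
  rw [drinfeldSokolovCoeff, wdb_neg]
  obtain _ | m := n
  · simp [gaugeRow_zero]
  · simp [hflat.wdb_gaugeRow hΩ m _ hz, todaSubdiag_eq_zero φ le_rfl]

lemma drinfeldSokolovCoeff_one (hn : 0 < n) {z : ℂ}
    (hdiag : ∑ k ∈ Finset.range n, todaDiag φ k z = 0) : drinfeldSokolovCoeff φ 1 z = 0 := by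
  obtain ⟨m, rfl⟩ := Nat.exists_eq_add_one_of_ne_zero hn.ne'
  simp [drinfeldSokolovCoeff, gaugeRow_succ_self, hdiag]

end GaugeMatrix

theorem toda_to_drinfeld_sokolov_general (n : ℕ) (hn : 0 < n) (Ω : Set ℂ) (hΩ : IsOpen Ω)
    (φ : Fin n → ℂ → ℝ) (hφ : ∀ i, ContDiffOn ℝ (⊤ : ℕ∞) (φ i) Ω)
    (hsum : ∀ z ∈ Ω, ∑ i, φ i z = 0)
    (htoda : ∀ z ∈ Ω, ∀ i : Fin n,
      wd (fun w => wdb (fun v => ((φ i v : ℝ) : ℂ)) w) z = todaRHS n φ i z) :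
    ∃ (G : ℂ → Matrix (Fin n) (Fin n) ℂ) (w : ℕ → ℂ → ℂ),
      (∀ i j : Fin n, ContDiffOn ℝ (⊤ : ℕ∞) (fun z => G z i j) Ω) ∧
      (∀ z ∈ Ω, ∀ i : Fin n, G z i i = 1) ∧
      (∀ z ∈ Ω, ∀ i j : Fin n, (i : ℕ) < (j : ℕ) → G z i j = 0) ∧
      (∀ z ∈ Ω, (G z).det = 1) ∧
      (∀ k : ℕ, 2 ≤ k → k ≤ n → ∀ z ∈ Ω, wdb (w k) z = 0) ∧
      (∀ z ∈ Ω,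
        (G z)⁻¹ * todaAp n φ z * G z + (G z)⁻¹ * mwd G z =
          Matrix.of fun (i j : Fin n) =>
            if (j : ℕ) = (i : ℕ) + 1 then 1
            else if (i : ℕ) = n - 1 ∧ (j : ℕ) + 1 < n then w (n - (j : ℕ)) z
            else 0) ∧
      (∀ z ∈ Ω, (G z)⁻¹ * todaApp n φ z * G z + (G z)⁻¹ * mwdb G z = 0) := by
  have hflat := isTodaFlat_toda hΩ hφ htoda
  have hdet (z : ℂ) : IsUnit (gaugeMatrix n (todaDiag φ) z).det := by simp [det_gaugeMatrix]
  refine ⟨gaugeMatrix n (todaDiag φ), drinfeldSokolovCoeff φ,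
    fun i j => contDiffOn_gaugeRow hΩ hflat.contDiffOn_diag i j,
    fun z _ i => congrFun (gaugeRow_self _ i) z,
    fun z _ i j hij => congrFun (gaugeRow_eq_zero_of_lt _ hij) z,
    fun z _ => det_gaugeMatrix _ z,
    fun k _ _ z hz => wdb_drinfeldSokolovCoeff hΩ hflat k hz,
    fun z hz => ?_, fun z hz => ?_⟩
  · have hw₁ := drinfeldSokolovCoeff_one hn (sum_todaDiag_eq_zero (by simp) hΩ hφ hsum hz)
    rw [← drinfeldSokolovMatrix_of_one_eq_zero (w := fun k => drinfeldSokolovCoeff φ k z) hw₁]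
    exact nonsing_inv_gauge_eq (hdet z) (todaAp_mul_gaugeMatrix_add_mwd φ z)
  · apply nonsing_inv_gauge_eq (hdet z)
    rw [todaApp_mul_gaugeMatrix_add_mwdb hΩ hflat hz, mul_zero]

/-- For a solution of the `A_{n−1}` Toda equations there is a smooth lower-triangular
unipotent `SLₙ(ℂ)`-valued gauge transformation `G` and holomorphic functions `w₂,…,wₙ`
bringing the Toda connection to the Drinfeld–Sokolov form, with `∂̄`-part zero and `∂`-part
`ℰ₊ + Σ_{j=1}^{n−1} w_{n+1−j}·E_{n,j}` (last row `(wₙ, w_{n−1}, …, w₂, 0)`). -/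
theorem toda_to_drinfeld_sokolov (n : ℕ) (hn : 2 ≤ n) (Ω : Set ℂ) (hΩ : IsOpen Ω)
    (hconn : IsConnected Ω)
    (φ : Fin n → ℂ → ℝ) (hφ : ∀ i, ContDiffOn ℝ (⊤ : ℕ∞) (φ i) Ω)
    (hsum : ∀ z ∈ Ω, ∑ i, φ i z = 0)
    (htoda : ∀ z ∈ Ω, ∀ i : Fin n,
      wd (fun w => wdb (fun v => ((φ i v : ℝ) : ℂ)) w) z = todaRHS n φ i z) :
    ∃ (G : ℂ → Matrix (Fin n) (Fin n) ℂ) (w : ℕ → ℂ → ℂ),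
      (∀ i j : Fin n, ContDiffOn ℝ (⊤ : ℕ∞) (fun z => G z i j) Ω) ∧
      (∀ z ∈ Ω, ∀ i : Fin n, G z i i = 1) ∧
      (∀ z ∈ Ω, ∀ i j : Fin n, (i : ℕ) < (j : ℕ) → G z i j = 0) ∧
      (∀ z ∈ Ω, (G z).det = 1) ∧
      (∀ k : ℕ, 2 ≤ k → k ≤ n → ∀ z ∈ Ω, wdb (w k) z = 0) ∧
      (∀ z ∈ Ω,
        (G z)⁻¹ * todaAp n φ z * G z + (G z)⁻¹ * mwd G z =
          Matrix.of fun (i j : Fin n) =>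
            if (j : ℕ) = (i : ℕ) + 1 then 1
            else if (i : ℕ) = n - 1 ∧ (j : ℕ) + 1 < n then w (n - (j : ℕ)) z
            else 0) ∧
      (∀ z ∈ Ω, (G z)⁻¹ * todaApp n φ z * G z + (G z)⁻¹ * mwdb G z = 0) :=
  toda_to_drinfeld_sokolov_general n (by omega) Ω hΩ φ hφ hsum htoda
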